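/- Global exponential stability of the PI dynamics (Theorem 3). Let f : E → ℝ and h : E → F₁ be continuously differentiable, let Φ : E → F₁ × F₂, Φ(x) = (h(x), q(x)), be a global C¹ diffeomorphism satisfying the orthonormality conditions, and assume: (i) there exists m̲ > 0 with ⟨Dh(x)†v, Dh(x)†v⟩ ≥ m̲‖v‖² for all x, v, and ‖Dh(x)∘Dh(x)†‖ ≤ m̄ for all x; (ii) f̃ = f ∘ p with p(η) = Φ⁻¹(0,η) is ρ_η-strongly convex (ρ_η > 0) with ∇f̃(η*) = 0, x* = p(η*); (iii) Φ and Φ⁻¹ are globally Lipschitz with constants L_Φ and L_Ψ; (iv) there exists L₁ > 0 such that ‖Dq(x̃)(∇f(x̃)) − Dq(p̂)(∇f(p̂))‖ ≤ L₁‖y‖ for all (y,η), where x̃ = Φ⁻¹(y,η), p̂ = Φ⁻¹(0,η); (v) φ(x) = −(Dh(x)∘Dh(x)†)⁻¹( Dh(x)(∇f(x)) ) is globally Lipschitz with constant L₂, and set λ* = φ(x*). Then there exists k_p* > 0 such that for every k_p > k_p* and every k_i with 0 < k_i < m̲ k_p², there exist c_π > 0 and ρ_π > 0 such that every pair of differentiable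 curves x : [0,∞) → E, z : [0,∞) → F₁ satisfying the PI dynamics x'(t) = −∇f(x(t)) − Dh(x(t))†( k_p h(x(t)) + k_i z(t) ) and z'(t) = h(x(t)) obeys, with λ(t) = k_p h(x(t)) + k_i z(t), the bound ‖(x(t) − x*, λ(t) − λ*)‖ ≤ c_π e^{−ρ_π t} ‖(x(0) − x*, λ(0) − λ*)‖ for all t ≥ 0, where the norm on E × F₁ is the ℓ² product norm. -/

import Mathlib

open scoped RealInnerProductSpace

/-!
In the coordinates `y = h x`, `η = q x`, orthogonality of `Dh` and `Dq` decouples the flow: with the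
multiplier `lam = kp • y + ki • z`, the Gram operator `A = Dh ∘ Dh†` and the least-squares
multiplier `φ`, it reads `y' = -A (lam - φ)` and `η' = -Dq (∇f)`, and `Dq (∇f)` is the gradient of
the reduced cost up to an error of size `‖y‖`.

Put `w = lam - lamstar`, `ζ = ki • z - lamstar` and `κ = ki / kp ^ 2`. Then `kp • y = w - ζ`, and
the normal part becomes `w' = kp • (κ • (w - ζ) - A (w - ψ))`, `ζ' = kp • κ • (w - ζ)`, where
`ψ = φ - lamstar` is bounded by the error in `(y, η)`. For `ψ = 0` the function `‖w‖ ^ 2 + ‖ζ‖ ^ 2`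
decreases as long as `κ` is below the coercivity constant `a` of `A`, but at a rate that
degenerates as `κ → 0` and as `κ → a`. Weighting `‖ζ‖ ^ 2` by `1 + ν / κ` repairs the first end
and adding `ε * κ * ‖w - ζ‖ ^ 2` the second. The resulting dissipation is uniform in `κ`, so the
coupling with `η`, of order `1 / kp` in one direction, is dominated once `kp` alone is large.
-/

open Set

section ExponentialDecay

theorem le_exp_mul_of_hasDerivWithinAt_le {V V' : ℝ → ℝ} {K : ℝ}
    (hV : ∀ t, 0 ≤ t → HasDerivWithinAt V (V' t) (Ici 0) t)
    (hV' : ∀ t, 0 ≤ t → V' t ≤ K * V t) {t : ℝ} (ht : 0 ≤ t) :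
    V t ≤ V 0 * Real.exp (K * t) := by
  have hgronwall := le_gronwallBound_of_liminf_deriv_right_le (f := V) (f' := V') (δ := V 0)
    (K := K) (ε := 0) (a := 0) (b := t)
    (fun s hs => (hV s hs.1).continuousWithinAt.mono Icc_subset_Ici_self)
    (fun s hs _ hr => ((hV s hs.1).mono (Ici_subset_Ici.2 hs.1)).liminf_right_slope_le hr)
    le_rfl (fun s hs => by simpa only [add_zero] using hV' s hs.1) t (right_mem_Icc.2 ht)
  rwa [sub_zero, gronwallBound_ε0] at hgronwall

theorem exponential_decay_of_lyapunov {V V' S : ℝ → ℝ} {α β c : ℝ} (hα : 0 < α) (hβ : 0 < β)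
    (hc : 0 ≤ c) (hV : ∀ t, 0 ≤ t → HasDerivWithinAt V (V' t) (Ici 0) t)
    (hV' : ∀ t, 0 ≤ t → V' t ≤ -c * S t) (hlow : ∀ t, 0 ≤ t → α * S t ≤ V t)
    (hup : ∀ t, 0 ≤ t → V t ≤ β * S t) {t : ℝ} (ht : 0 ≤ t) :
    S t ≤ β / α * Real.exp (-(c / β) * t) * S 0 := by
  have hrate : ∀ s, 0 ≤ s → V' s ≤ -(c / β) * V s := fun s hs => by
    have : c / β * V s ≤ c / β * (β * S s) := by gcongr; exact hup s hs
    have : c / β * (β * S s) = c * S s := by field_simp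
    linarith [hV' s hs]
  calc S t = α⁻¹ * (α * S t) := by field_simp
    _ ≤ α⁻¹ * (V 0 * Real.exp (-(c / β) * t)) := by
      have := (hlow t ht).trans (le_exp_mul_of_hasDerivWithinAt_le hV hrate ht)
      exact mul_le_mul_of_nonneg_left this (inv_nonneg.2 hα.le)
    _ ≤ α⁻¹ * (β * S 0 * Real.exp (-(c / β) * t)) := by gcongr; exact hup 0 le_rfl
    _ = β / α * Real.exp (-(c / β) * t) * S 0 := by ring

theorem sqrt_le_mul_exp_mul_sqrt {X Y S T c c₁ c₂ r t : ℝ} (hc : 0 ≤ c) (hc₁ : 0 ≤ c₁)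
    (hc₂ : 0 ≤ c₂) (hXS : X ≤ c₁ * S) (hST : S ≤ c * Real.exp (-r * t) * T) (hTY : T ≤ c₂ * Y) :
    √X ≤ √(c₁ * c * c₂) * Real.exp (-(r / 2) * t) * √Y := by
  have hexp : Real.exp (-(r / 2) * t) = √(Real.exp (-r * t)) := by
    rw [← Real.exp_half]
    congr 1
    ring
  rw [hexp, ← Real.sqrt_mul (by positivity), ← Real.sqrt_mul (by positivity)]
  apply Real.sqrt_le_sqrt
  calc X ≤ c₁ * (c * Real.exp (-r * t) * (c₂ * Y)) :=
        hXS.trans (by gcongr; exact hST.trans (by gcongr))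
    _ = c₁ * c * c₂ * Real.exp (-r * t) * Y := by ring

end ExponentialDecay

section FastSubsystem

variable {F : Type*} [NormedAddCommGroup F] {a B ν ε κ k : ℝ}

theorem norm_sub_sq_le_two_mul (u v : F) : ‖u - v‖ ^ 2 ≤ 2 * (‖u‖ ^ 2 + ‖v‖ ^ 2) :=
  (pow_le_pow_left₀ (norm_nonneg _) (norm_sub_le u v) 2).trans add_sq_le

/-- Lyapunov function of the fast subsystem `w' = κ • (w - ζ) - A (w - ψ)`, `ζ' = κ • (w - ζ)`. -/
noncomputable def fastLyapunov (ν ε κ : ℝ) (w ζ : F) : ℝ :=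
  ‖w‖ ^ 2 + (1 + ν / κ) * ‖ζ‖ ^ 2 + ε * κ * ‖w - ζ‖ ^ 2

theorem le_fastLyapunov (hν : 0 ≤ ν) (hε : 0 ≤ ε) (hκ : 0 ≤ κ) (w ζ : F) :
    ‖w‖ ^ 2 + ‖ζ‖ ^ 2 ≤ fastLyapunov ν ε κ w ζ := by
  have hζ : 0 ≤ ν / κ * ‖ζ‖ ^ 2 := by positivity
  have hwζ : 0 ≤ ε * κ * ‖w - ζ‖ ^ 2 := by positivity
  unfold fastLyapunov
  linarith

theorem fastLyapunov_le (hν : 0 ≤ ν) (hε : 0 ≤ ε) (hκ : 0 ≤ κ) (w ζ : F) :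
    fastLyapunov ν ε κ w ζ ≤ (1 + ν / κ + 2 * (ε * κ)) * (‖w‖ ^ 2 + ‖ζ‖ ^ 2) := by
  have hw : 0 ≤ ν / κ * ‖w‖ ^ 2 := by positivity
  have hwζ : ε * κ * ‖w - ζ‖ ^ 2 ≤ ε * κ * (2 * (‖w‖ ^ 2 + ‖ζ‖ ^ 2)) := by
    gcongr
    exact norm_sub_sq_le_two_mul w ζ
  unfold fastLyapunov
  linarith

variable [InnerProductSpace ℝ F]

/-- Derivative of `fastLyapunov` along `w' = κ • (w - ζ) - A (w - ψ)`, `ζ' = κ • (w - ζ)`, with the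
input `ψ` as a free argument. -/
noncomputable def fastLyapunovDeriv (A : F →L[ℝ] F) (ν ε κ : ℝ) (w ζ ψ : F) : ℝ :=
  2 * ⟪w, κ • (w - ζ) - A (w - ψ)⟫ + (1 + ν / κ) * (2 * ⟪ζ, κ • (w - ζ)⟫)
    + ε * κ * (2 * ⟪w - ζ, -A (w - ψ)⟫)

variable {A : F →L[ℝ] F}

theorem hasDerivWithinAt_fastLyapunov {w ζ ψ : ℝ → F} {A : ℝ → F →L[ℝ] F} {s : Set ℝ} {t : ℝ}
    (hw : HasDerivWithinAt w (k • (κ • (w t - ζ t) - A t (w t - ψ t))) s t)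
    (hζ : HasDerivWithinAt ζ (k • κ • (w t - ζ t)) s t) :
    HasDerivWithinAt (fun τ => fastLyapunov ν ε κ (w τ) (ζ τ))
      (k * fastLyapunovDeriv (A t) ν ε κ (w t) (ζ t) (ψ t)) s t := by
  have hwζ : HasDerivWithinAt (fun τ => w τ - ζ τ) (k • -A t (w t - ψ t)) s t :=
    (hw.fun_sub hζ).congr_deriv (by module)
  refine ((hw.norm_sq.add (hζ.norm_sq.const_mul (1 + ν / κ))).add
    (hwζ.norm_sq.const_mul (ε * κ))).congr_deriv ?_
  simp only [fastLyapunovDeriv, real_inner_smul_right _ _ k]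
  ring

theorem fastLyapunovDeriv_eq_add (A : F →L[ℝ] F) (ν ε κ : ℝ) (w ζ ψ : F) :
    fastLyapunovDeriv A ν ε κ w ζ ψ =
      fastLyapunovDeriv A ν ε κ w ζ 0 + 2 * ⟪w + (ε * κ) • (w - ζ), A ψ⟫ := by
  simp only [fastLyapunovDeriv, map_sub, sub_zero, neg_sub, inner_sub_right, inner_neg_right,
    inner_add_left, real_inner_smul_left]
  ring

theorem fastLyapunovDeriv_zero_eq (A : F →L[ℝ] F) (ν ε : ℝ) (hκ : κ ≠ 0) (w ζ : F) :
    fastLyapunovDeriv A ν ε κ w ζ 0 =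
      2 * κ * ‖w‖ ^ 2 - 2 * (κ + ν) * ‖ζ‖ ^ 2 + 2 * ν * ⟪ζ, w⟫
        - 2 * (1 + ε * κ) * ⟪w, A w⟫ + 2 * (ε * κ) * ⟪ζ, A w⟫ := by
  simp only [fastLyapunovDeriv, sub_zero, inner_sub_right, inner_sub_left, inner_neg_right,
    real_inner_smul_right, real_inner_comm ζ w, real_inner_self_eq_norm_sq]
  field_simp
  ring

theorem fastLyapunovDeriv_zero_le (hε : 0 ≤ ε) (hεB : ε * B ^ 2 ≤ a) (hν : 0 ≤ ν) (hνa : ν ≤ a)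
    (hνε : 2 * ν ≤ ε * a ^ 2) (hκ : 0 < κ) (hκa : κ ≤ a) (hcoer : ∀ v, a * ‖v‖ ^ 2 ≤ ⟪v, A v⟫)
    (hA : ‖A‖ ≤ B) (w ζ : F) :
    fastLyapunovDeriv A ν ε κ w ζ 0 ≤ -ν * (‖w‖ ^ 2 + ‖ζ‖ ^ 2) := by
  have hAw : (1 + ε * κ) * (a * ‖w‖ ^ 2) ≤ (1 + ε * κ) * ⟪w, A w⟫ := by gcongr; exact hcoer w
  have hζw : 2 * ν * ⟪ζ, w⟫ ≤ ν * (‖ζ‖ ^ 2 + ‖w‖ ^ 2) := by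
    have : 0 ≤ ν * ‖ζ - w‖ ^ 2 := by positivity
    rw [norm_sub_sq_real] at this
    linarith
  have hζAw : 2 * (ε * κ) * ⟪ζ, A w⟫ ≤ κ * ‖ζ‖ ^ 2 + ε * κ * a * ‖w‖ ^ 2 := by
    calc 2 * (ε * κ) * ⟪ζ, A w⟫ ≤ 2 * (ε * κ) * (‖ζ‖ * (B * ‖w‖)) := by
          gcongr
          exact (real_inner_le_norm _ _).trans (by gcongr; exact A.le_of_opNorm_le hA w)
      _ ≤ κ * ‖ζ‖ ^ 2 + ε * κ * (ε * B ^ 2) * ‖w‖ ^ 2 := by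
          linarith [mul_nonneg hκ.le (sq_nonneg (‖ζ‖ - ε * B * ‖w‖))]
      _ ≤ κ * ‖ζ‖ ^ 2 + ε * κ * a * ‖w‖ ^ 2 := by gcongr
  -- The left side minus the right side is affine in `κ`, and nonpositive at `κ = 0` and `κ = a`.
  have hinterp : 2 * κ + 2 * ν ≤ 2 * a + ε * κ * a := by
    have ha : 0 < a := hκ.trans_le hκa
    refine le_of_mul_le_mul_right ?_ ha
    linarith [mul_le_mul_of_nonneg_right hνa (sub_nonneg.2 hκa),
      mul_le_mul_of_nonneg_right hνε hκ.le]
  have hw : (2 * κ + 2 * ν) * ‖w‖ ^ 2 ≤ (2 * a + ε * κ * a) * ‖w‖ ^ 2 := by gcongr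
  have hζ : 0 ≤ κ * ‖ζ‖ ^ 2 := by positivity
  rw [fastLyapunovDeriv_zero_eq A ν ε hκ.ne']
  linarith

theorem fastLyapunovDeriv_le (hε : 0 ≤ ε) (hεB : ε * B ^ 2 ≤ a) (hν : 0 ≤ ν) (hνa : ν ≤ a)
    (hνε : 2 * ν ≤ ε * a ^ 2) (hκ : 0 < κ) (hκa : κ ≤ a) (hcoer : ∀ v, a * ‖v‖ ^ 2 ≤ ⟪v, A v⟫)
    (hA : ‖A‖ ≤ B) (w ζ ψ : F) :
    fastLyapunovDeriv A ν ε κ w ζ ψ ≤ -ν * (‖w‖ ^ 2 + ‖ζ‖ ^ 2)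
      + 2 * (B * (1 + ε * a)) * ‖ψ‖ * (‖w‖ + ‖ζ‖) := by
  have hdirection : ‖w + (ε * κ) • (w - ζ)‖ ≤ (1 + ε * a) * (‖w‖ + ‖ζ‖) := by
    calc ‖w + (ε * κ) • (w - ζ)‖ ≤ ‖w‖ + ε * κ * (‖w‖ + ‖ζ‖) := by
          refine (norm_add_le _ _).trans ?_
          rw [norm_smul, Real.norm_of_nonneg (by positivity)]
          gcongr
          exact norm_sub_le w ζ
      _ ≤ (‖w‖ + ‖ζ‖) + ε * a * (‖w‖ + ‖ζ‖) := by
        gcongr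
        exact le_add_of_nonneg_right (norm_nonneg ζ)
      _ = (1 + ε * a) * (‖w‖ + ‖ζ‖) := by ring
  have hinput : ⟪w + (ε * κ) • (w - ζ), A ψ⟫ ≤ (1 + ε * a) * (‖w‖ + ‖ζ‖) * (B * ‖ψ‖) :=
    (real_inner_le_norm _ _).trans
      (mul_le_mul hdirection (A.le_of_opNorm_le hA ψ) (norm_nonneg _)
        ((norm_nonneg _).trans hdirection))
  rw [fastLyapunovDeriv_eq_add]
  linarith [fastLyapunovDeriv_zero_le hε hεB hν hνa hνε hκ hκa hcoer hA w ζ]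

end FastSubsystem

section SlowFastCoupling

variable {F G : Type*} [NormedAddCommGroup F] [InnerProductSpace ℝ F] [NormedAddCommGroup G]
  [InnerProductSpace ℝ G] {a B L ρ L₁ : ℝ}

/-- Bounds at one instant on the error system in the variables `w = lam - lamstar`,
`ζ = ki • z - lamstar` and `η = q x - q xstar`, with Gram operator `A`, least-squares multiplier
error `ψ` and tangential gradient `g`. The constraint value enters through `‖h x‖ = ‖w - ζ‖ / k`. -/
structure ErrorBounds (a B L ρ L₁ k : ℝ) (A : F →L[ℝ] F) (w ζ ψ : F) (η g : G) : Prop where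
  coercive : ∀ v, a * ‖v‖ ^ 2 ≤ ⟪v, A v⟫
  opNorm_le : ‖A‖ ≤ B
  multiplier_le : ‖ψ‖ ≤ L * (‖w - ζ‖ / k + ‖η‖)
  secant_le : ρ * ‖η‖ ^ 2 - L₁ * (‖w - ζ‖ / k) * ‖η‖ ≤ ⟪η, g⟫

/-- The PI dynamics in the error variables of `ErrorBounds`, where `κ = ki / k ^ 2`. -/
structure IsErrorTrajectory (k κ : ℝ) (A : ℝ → F →L[ℝ] F) (w ζ ψ : ℝ → F) (η g : ℝ → G) :
    Prop where
  hasDerivWithinAt_multiplier : ∀ t, 0 ≤ t →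
    HasDerivWithinAt w (k • (κ • (w t - ζ t) - A t (w t - ψ t))) (Ici 0) t
  hasDerivWithinAt_integral : ∀ t, 0 ≤ t → HasDerivWithinAt ζ (k • κ • (w t - ζ t)) (Ici 0) t
  hasDerivWithinAt_tangential : ∀ t, 0 ≤ t → HasDerivWithinAt η (-g t) (Ici 0) t

theorem exists_small_gain_threshold {ν C ρ : ℝ} (hν : 0 < ν) (hC : 0 ≤ C) (hρ : 0 < ρ) (L₁ : ℝ) :
    ∃ N d K : ℝ, 0 < N ∧ 0 < d ∧ 0 < K ∧ ∀ k, K < k → ∀ R e : ℝ, 0 ≤ R → 0 ≤ e →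
      -ν * R ^ 2 + C * (R / k + e) * R + 2 * N * (L₁ * (R / k) * e - ρ * e ^ 2)
        ≤ -d * (R ^ 2 + e ^ 2) := by
  obtain ⟨N, hN⟩ : ∃ N, N * ρ = (C + 1) ^ 2 / ν := ⟨(C + 1) ^ 2 / ν / ρ, by field_simp⟩
  have hNρ : 0 < N * ρ := by rw [hN]; positivity
  have hN0 : 0 < N := pos_of_mul_pos_left hNρ hρ.le
  refine ⟨N, min (ν / 2) (N * ρ), 4 * C / ν + 2 * N * |L₁| + 1, hN0, by positivity,
    by positivity, fun k hk R e hR he => ?_⟩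
  have hCν : 0 ≤ 4 * C / ν := by positivity
  have hNL : 0 ≤ 2 * N * |L₁| := by positivity
  have hk0 : 0 < k := by linarith
  have hCk : C / k ≤ ν / 4 := by
    rw [div_le_iff₀ hk0]
    have : 4 * C ≤ k * ν := (div_le_iff₀ hν).1 (by linarith)
    linarith
  have hLk : 2 * N * L₁ / k ≤ 1 := by
    rw [div_le_one hk0]
    linarith [mul_le_mul_of_nonneg_left (le_abs_self L₁) (by positivity : 0 ≤ 2 * N)]
  have hyoung : (C + 1) * R * e ≤ ν / 4 * R ^ 2 + N * ρ * e ^ 2 := by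
    have hsq : ν / 4 * R ^ 2 + (C + 1) ^ 2 / ν * e ^ 2 - (C + 1) * R * e
        = (ν * R - 2 * (C + 1) * e) ^ 2 / (4 * ν) := by field_simp; ring
    have : 0 ≤ (ν * R - 2 * (C + 1) * e) ^ 2 / (4 * ν) := by positivity
    rw [hN]
    linarith
  calc -ν * R ^ 2 + C * (R / k + e) * R + 2 * N * (L₁ * (R / k) * e - ρ * e ^ 2)
      = -ν * R ^ 2 + C / k * R ^ 2 + C * R * e + 2 * N * L₁ / k * (R * e)
          - 2 * (N * ρ) * e ^ 2 := by ring
    _ ≤ -ν * R ^ 2 + ν / 4 * R ^ 2 + C * R * e + 1 * (R * e) - 2 * (N * ρ) * e ^ 2 := by gcongr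
    _ ≤ -(ν / 2 * R ^ 2 + N * ρ * e ^ 2) := by linarith
    _ ≤ -(min (ν / 2) (N * ρ) * R ^ 2 + min (ν / 2) (N * ρ) * e ^ 2) := by
      gcongr
      exacts [min_le_left _ _, min_le_right _ _]
    _ = -min (ν / 2) (N * ρ) * (R ^ 2 + e ^ 2) := by ring

theorem exists_lyapunov_gains (ha : 0 < a) (hB : 0 < B) (hL : 0 ≤ L) (hρ : 0 < ρ) (hL₁ : 0 ≤ L₁) :
    ∃ ν ε N d K : ℝ, 0 < ν ∧ 0 < ε ∧ 0 < N ∧ 0 < d ∧ 0 < K ∧ ∀ k κ, K < k → 0 < κ → κ ≤ a →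
      ∀ (A : F →L[ℝ] F) (w ζ ψ : F) (η g : G), ErrorBounds a B L ρ L₁ k A w ζ ψ η g →
        fastLyapunovDeriv A ν ε κ w ζ ψ + 2 * N * ⟪η, -g⟫
          ≤ -d * (‖w‖ ^ 2 + ‖ζ‖ ^ 2 + ‖η‖ ^ 2) := by
  obtain ⟨ε, hε, hεB⟩ : ∃ ε, 0 < ε ∧ ε * B ^ 2 ≤ a :=
    ⟨a / B ^ 2, by positivity, by rw [div_mul_cancel₀ _ (by positivity)]⟩
  obtain ⟨ν, hν, hνa, hνε⟩ : ∃ ν, 0 < ν ∧ ν ≤ a ∧ ν ≤ ε * a ^ 2 / 2 :=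
    ⟨min a (ε * a ^ 2 / 2), by positivity, min_le_left _ _, min_le_right _ _⟩
  obtain ⟨N, d, K, hN, hd, hK, hgain⟩ := exists_small_gain_threshold (half_pos hν)
    (by positivity : 0 ≤ 2 * (B * (1 + ε * a)) * L) hρ L₁
  refine ⟨ν, ε, N, d, K, hν, hε, hN, hd, hK, fun k κ hk hκ hκa A w ζ ψ η g hb => ?_⟩
  have hk0 : 0 < k := hK.trans hk
  have hwζ : ‖w - ζ‖ / k ≤ (‖w‖ + ‖ζ‖) / k := by gcongr; exact norm_sub_le w ζ
  have hfast := fastLyapunovDeriv_le hε.le hεB hν.le hνa (by linarith) hκ hκa hb.coercive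
    hb.opNorm_le w ζ ψ
  have hψ : 2 * (B * (1 + ε * a)) * ‖ψ‖ * (‖w‖ + ‖ζ‖) ≤
      2 * (B * (1 + ε * a)) * L * ((‖w‖ + ‖ζ‖) / k + ‖η‖) * (‖w‖ + ‖ζ‖) := by
    rw [mul_assoc _ L]
    gcongr
    exact hb.multiplier_le.trans (by gcongr)
  have hslow : 2 * N * ⟪η, -g⟫
      ≤ 2 * N * (L₁ * ((‖w‖ + ‖ζ‖) / k) * ‖η‖ - ρ * ‖η‖ ^ 2) := by
    have : L₁ * (‖w - ζ‖ / k) * ‖η‖ ≤ L₁ * ((‖w‖ + ‖ζ‖) / k) * ‖η‖ := by gcongr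
    rw [inner_neg_right]
    gcongr
    linarith [hb.secant_le]
  have hsum : ν / 2 * (‖w‖ + ‖ζ‖) ^ 2 ≤ ν * (‖w‖ ^ 2 + ‖ζ‖ ^ 2) := by
    linarith [mul_le_mul_of_nonneg_left (add_sq_le (a := ‖w‖) (b := ‖ζ‖)) (half_pos hν).le]
  have hsplit : d * (‖w‖ ^ 2 + ‖ζ‖ ^ 2) ≤ d * (‖w‖ + ‖ζ‖) ^ 2 := by
    gcongr
    linarith [mul_nonneg (norm_nonneg w) (norm_nonneg ζ)]
  linarith [hgain k hk (‖w‖ + ‖ζ‖) ‖η‖ (by positivity) (norm_nonneg η)]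

theorem exists_gain_threshold_error_decay (ha : 0 < a) (hB : 0 < B) (hL : 0 ≤ L) (hρ : 0 < ρ)
    (hL₁ : 0 ≤ L₁) :
    ∃ K : ℝ, 0 < K ∧ ∀ k κ, K < k → 0 < κ → κ ≤ a → ∃ c r : ℝ, 0 < c ∧ 0 < r ∧
      ∀ (A : ℝ → F →L[ℝ] F) (w ζ ψ : ℝ → F) (η g : ℝ → G), IsErrorTrajectory k κ A w ζ ψ η g →
        (∀ t, 0 ≤ t → ErrorBounds a B L ρ L₁ k (A t) (w t) (ζ t) (ψ t) (η t) (g t)) →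
        ∀ t, 0 ≤ t → ‖w t‖ ^ 2 + ‖ζ t‖ ^ 2 + ‖η t‖ ^ 2
          ≤ c * Real.exp (-r * t) * (‖w 0‖ ^ 2 + ‖ζ 0‖ ^ 2 + ‖η 0‖ ^ 2) := by
  obtain ⟨ν, ε, N, d, K, hν, hε, hN, hd, hK, hdiss⟩ :=
    exists_lyapunov_gains (F := F) (G := G) ha hB hL hρ hL₁
  refine ⟨K, hK, fun k κ hk hκ hκa => ?_⟩
  have hk0 : 0 < k := hK.trans hk
  set β := 1 + ν / κ + 2 * (ε * κ) + k * N with hβ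
  have hβ0 : 0 < β := by positivity
  have hα0 : 0 < min 1 (k * N) := by positivity
  refine ⟨β / min 1 (k * N), k * d / β, by positivity, by positivity,
    fun A w ζ ψ η g htraj hbounds t ht => ?_⟩
  refine exponential_decay_of_lyapunov (S := fun t => ‖w t‖ ^ 2 + ‖ζ t‖ ^ 2 + ‖η t‖ ^ 2)
    (V := fun t => fastLyapunov ν ε κ (w t) (ζ t) + k * N * ‖η t‖ ^ 2) hα0 hβ0
    (by positivity : 0 ≤ k * d)
    (fun s hs => (hasDerivWithinAt_fastLyapunov (htraj.hasDerivWithinAt_multiplier s hs)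
      (htraj.hasDerivWithinAt_integral s hs)).add
      ((htraj.hasDerivWithinAt_tangential s hs).norm_sq.const_mul (k * N)))
    (fun s hs => ?_) (fun s _ => ?_) (fun s _ => ?_) ht
  · linarith [mul_le_mul_of_nonneg_left (hdiss k κ hk hκ hκa _ _ _ _ _ _ (hbounds s hs)) hk0.le]
  · calc min 1 (k * N) * (‖w s‖ ^ 2 + ‖ζ s‖ ^ 2 + ‖η s‖ ^ 2)
        = min 1 (k * N) * (‖w s‖ ^ 2 + ‖ζ s‖ ^ 2) + min 1 (k * N) * ‖η s‖ ^ 2 := by ring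
      _ ≤ 1 * (‖w s‖ ^ 2 + ‖ζ s‖ ^ 2) + k * N * ‖η s‖ ^ 2 := by
        gcongr
        exacts [min_le_left _ _, min_le_right _ _]
      _ ≤ fastLyapunov ν ε κ (w s) (ζ s) + k * N * ‖η s‖ ^ 2 := by
        rw [one_mul]
        gcongr
        exact le_fastLyapunov hν.le hε.le hκ.le (w s) (ζ s)
  · have hfast := fastLyapunov_le hν.le hε.le hκ.le (w s) (ζ s)
    have : 0 ≤ k * N * (‖w s‖ ^ 2 + ‖ζ s‖ ^ 2) := by positivity
    have : 0 ≤ (1 + ν / κ + 2 * (ε * κ)) * ‖η s‖ ^ 2 := by positivity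
    rw [hβ]
    linarith

end SlowFastCoupling

section Coordinates

theorem sq_norm_add_sq_norm_le_error {F G : Type*} [NormedAddCommGroup F] [NormedSpace ℝ F]
    [NormedAddCommGroup G] {y w ζ : F} {η : G} {k X C : ℝ} (hk : 0 < k) (hy : k • y = w - ζ)
    (hX : 0 ≤ X) (hXle : X ≤ C * √(‖y‖ ^ 2 + ‖η‖ ^ 2)) :
    X ^ 2 + ‖w‖ ^ 2 ≤ (1 + C ^ 2) * (1 + 2 / k ^ 2) * (‖w‖ ^ 2 + ‖ζ‖ ^ 2 + ‖η‖ ^ 2) := by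
  have hXsq : X ^ 2 ≤ C ^ 2 * (‖y‖ ^ 2 + ‖η‖ ^ 2) := by
    have := pow_le_pow_left₀ hX hXle 2
    rwa [mul_pow, Real.sq_sqrt (by positivity)] at this
  have hysq : ‖y‖ ^ 2 ≤ 2 / k ^ 2 * (‖w‖ ^ 2 + ‖ζ‖ ^ 2) := by
    have hky : k ^ 2 * ‖y‖ ^ 2 = ‖w - ζ‖ ^ 2 := by
      rw [← hy, norm_smul, mul_pow, Real.norm_of_nonneg hk.le]
    rw [div_mul_eq_mul_div, le_div_iff₀' (by positivity), hky]
    exact norm_sub_sq_le_two_mul w ζ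
  have hη : 0 ≤ 2 / k ^ 2 * ‖η‖ ^ 2 := by positivity
  calc X ^ 2 + ‖w‖ ^ 2 ≤ C ^ 2 * (‖y‖ ^ 2 + ‖η‖ ^ 2 + ‖w‖ ^ 2)
        + (‖y‖ ^ 2 + ‖η‖ ^ 2 + ‖w‖ ^ 2) := by
        linarith [mul_nonneg (sq_nonneg C) (sq_nonneg ‖w‖), sq_nonneg ‖y‖, sq_nonneg ‖η‖]
    _ = (1 + C ^ 2) * (‖y‖ ^ 2 + ‖η‖ ^ 2 + ‖w‖ ^ 2) := by ring
    _ ≤ (1 + C ^ 2) * ((1 + 2 / k ^ 2) * (‖w‖ ^ 2 + ‖ζ‖ ^ 2 + ‖η‖ ^ 2)) := by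
      gcongr
      linarith [sq_nonneg ‖ζ‖]
    _ = (1 + C ^ 2) * (1 + 2 / k ^ 2) * (‖w‖ ^ 2 + ‖ζ‖ ^ 2 + ‖η‖ ^ 2) := by ring

theorem error_le_sq_norm_add_sq_norm {F G : Type*} [NormedAddCommGroup F] [NormedSpace ℝ F]
    [NormedAddCommGroup G] {y w ζ : F} {η : G} {k X C : ℝ} (hy : k • y = w - ζ)
    (hle : √(‖y‖ ^ 2 + ‖η‖ ^ 2) ≤ C * X) :
    ‖w‖ ^ 2 + ‖ζ‖ ^ 2 + ‖η‖ ^ 2 ≤ (3 + (1 + 2 * k ^ 2) * C ^ 2) * (X ^ 2 + ‖w‖ ^ 2) := by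
  have hsq : ‖y‖ ^ 2 + ‖η‖ ^ 2 ≤ C ^ 2 * X ^ 2 := by
    have := pow_le_pow_left₀ (Real.sqrt_nonneg _) hle 2
    rwa [mul_pow, Real.sq_sqrt (by positivity)] at this
  have hζsq : ‖ζ‖ ^ 2 ≤ 2 * (‖w‖ ^ 2 + k ^ 2 * ‖y‖ ^ 2) := by
    have := norm_sub_sq_le_two_mul w (k • y)
    rwa [hy, sub_sub_cancel, ← hy, norm_smul, mul_pow, Real.norm_eq_abs, sq_abs] at this
  have hη : 0 ≤ k ^ 2 * ‖η‖ ^ 2 := by positivity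
  calc ‖w‖ ^ 2 + ‖ζ‖ ^ 2 + ‖η‖ ^ 2
      ≤ 3 * ‖w‖ ^ 2 + (1 + 2 * k ^ 2) * (‖y‖ ^ 2 + ‖η‖ ^ 2) := by
        linarith [sq_nonneg ‖y‖]
    _ ≤ 3 * ‖w‖ ^ 2 + (1 + 2 * k ^ 2) * (C ^ 2 * X ^ 2) := by gcongr
    _ ≤ (3 + (1 + 2 * k ^ 2) * C ^ 2) * (X ^ 2 + ‖w‖ ^ 2) := by
      have : 0 ≤ (1 + 2 * k ^ 2) * C ^ 2 * ‖w‖ ^ 2 := by positivity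
      linarith [sq_nonneg X]

end Coordinates

section InnerProduct

variable {G : Type*} [NormedAddCommGroup G] [InnerProductSpace ℝ G]

theorem inner_sub_mul_norm_le_inner {u g g₀ : G} {δ : ℝ} (hg : ‖g - g₀‖ ≤ δ) :
    ⟪u, g₀⟫ - δ * ‖u‖ ≤ ⟪u, g⟫ := by
  have hcs : ⟪u, g₀ - g⟫ ≤ ‖u‖ * δ :=
    (real_inner_le_norm _ _).trans (by rw [norm_sub_rev]; gcongr)
  rw [inner_sub_right] at hcs
  linarith

theorem mul_sq_norm_sub_le_inner_gradient_sub [CompleteSpace G] {g : G → ℝ} {ρ : ℝ}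
    (hg : ∀ u v, g v ≥ g u + ⟪gradient g u, v - u⟫ + ρ / 2 * ‖v - u‖ ^ 2) (u v : G) :
    ρ * ‖u - v‖ ^ 2 ≤ ⟪u - v, gradient g u - gradient g v⟫ := by
  have hvu := hg v u
  have huv := hg u v
  rw [← neg_sub u v, inner_neg_right, norm_neg] at huv
  rw [real_inner_comm, inner_sub_left]
  linarith

end InnerProduct

section ConstrainedGeometry

open ContinuousLinearMap (adjoint)

variable {E F : Type*} [NormedAddCommGroup E] [InnerProductSpace ℝ E] [CompleteSpace E]
  [NormedAddCommGroup F] [InnerProductSpace ℝ F] [CompleteSpace F] {f : E → ℝ} {h : E → F}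

/-- The Gram operator `Dh(x) ∘ Dh(x)†` of the constraint map `h`. -/
noncomputable def constraintGram (h : E → F) (x : E) : F →L[ℝ] F :=
  fderiv ℝ h x ∘L adjoint (fderiv ℝ h x)

/-- The map `φ` of the paper: the multiplier minimizing `‖∇f(x) + Dh(x)† lam‖`. It is defined by
`Ring.inverse`, so its value is `0` where the Gram operator is not invertible. -/
noncomputable def leastSquaresMultiplier (f : E → ℝ) (h : E → F) (x : E) : F :=
  -(Ring.inverse (constraintGram h x) (fderiv ℝ h x (gradient f x)))

/-- Solutions on `[0, ∞)` of the PI dynamics for the cost `f` and the constraint `h`, with gains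
`kp`, `ki` and integral state `z`. The derivative at `0` is one-sided. -/
structure IsPITrajectory (f : E → ℝ) (h : E → F) (kp ki : ℝ) (x : ℝ → E) (z : ℝ → F) : Prop where
  hasDerivWithinAt_state : ∀ t, 0 ≤ t → HasDerivWithinAt x
    (-gradient f (x t) - adjoint (fderiv ℝ h (x t)) (kp • h (x t) + ki • z t)) (Ici 0) t
  hasDerivWithinAt_integral : ∀ t, 0 ≤ t → HasDerivWithinAt z (h (x t)) (Ici 0) t

theorem inner_constraintGram_right (h : E → F) (x : E) (v : F) :
    ⟪v, constraintGram h x v⟫ = ⟪adjoint (fderiv ℝ h x) v, adjoint (fderiv ℝ h x) v⟫ := by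
  rw [constraintGram, ContinuousLinearMap.comp_apply, ContinuousLinearMap.adjoint_inner_left]

theorem isUnit_constraintGram {μ : ℝ} (hμ : 0 < μ) {x : E}
    (hcoer : ∀ v, μ * ‖v‖ ^ 2 ≤ ⟪v, constraintGram h x v⟫) : IsUnit (constraintGram h x) := by
  refine ContinuousLinearMap.isUnit_of_forall_le_norm_inner_map _ (c := ⟨μ, hμ.le⟩) hμ fun v => ?_
  rw [real_inner_comm, mul_comm]
  exact (hcoer v).trans (le_abs_self _)

theorem constraintGram_leastSquaresMultiplier {x : E} (hx : IsUnit (constraintGram h x)) :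
    constraintGram h x (leastSquaresMultiplier f h x) = -fderiv ℝ h x (gradient f x) := by
  rw [leastSquaresMultiplier, map_neg, ← mul_apply_eq_comp,
    Ring.mul_inverse_cancel _ hx, one_apply_eq_self]

theorem norm_multiplier_sub_le {G : Type*} [NormedAddCommGroup G] {q : E → G}
    {x xstar : E} {lam : F} {Lφ LΨ : ℝ}
    (hstar : h xstar = 0)
    (hφ : ‖leastSquaresMultiplier f h x - lam‖ ≤ Lφ * ‖x - xstar‖)
    (hΨ : ‖x - xstar‖ ≤ LΨ * √(‖h x - h xstar‖ ^ 2 + ‖q x - q xstar‖ ^ 2)) :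
    ‖leastSquaresMultiplier f h x - lam‖ ≤ |Lφ| * |LΨ| * (‖h x‖ + ‖q x - q xstar‖) := by
  have hsqrt : √(‖h x‖ ^ 2 + ‖q x - q xstar‖ ^ 2) ≤ ‖h x‖ + ‖q x - q xstar‖ :=
    Real.sqrt_le_iff.2 ⟨by positivity, by
      linarith [mul_nonneg (norm_nonneg (h x)) (norm_nonneg (q x - q xstar))]⟩
  rw [hstar, sub_zero] at hΨ
  calc ‖leastSquaresMultiplier f h x - lam‖ ≤ |Lφ| * ‖x - xstar‖ :=
        hφ.trans (by gcongr; exact le_abs_self Lφ)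
    _ ≤ |Lφ| * (|LΨ| * √(‖h x‖ ^ 2 + ‖q x - q xstar‖ ^ 2)) := by
      gcongr
      exact hΨ.trans (by gcongr; exact le_abs_self LΨ)
    _ ≤ |Lφ| * |LΨ| * (‖h x‖ + ‖q x - q xstar‖) := by
      rw [mul_assoc]
      gcongr

variable {G : Type*} [NormedAddCommGroup G] [InnerProductSpace ℝ G]

theorem fderiv_inverse_inr [CompleteSpace G] {q : E → G} {Ψ : F × G → E} {x : E}
    (hh : DifferentiableAt ℝ h x) (hq : DifferentiableAt ℝ q x)
    (hΨ : DifferentiableAt ℝ Ψ (h x, q x)) (hleft : ∀ x, Ψ (h x, q x) = x)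
    (horth₁ : fderiv ℝ q x ∘L adjoint (fderiv ℝ q x) = ContinuousLinearMap.id ℝ G)
    (horth₂ : fderiv ℝ q x ∘L adjoint (fderiv ℝ h x) = 0) (v : G) :
    fderiv ℝ Ψ (h x, q x) (0, v) = adjoint (fderiv ℝ q x) v := by
  have hcomp := hΨ.hasFDerivAt.comp x (hh.hasFDerivAt.prodMk hq.hasFDerivAt)
  rw [show Ψ ∘ (fun x => (h x, q x)) = id from funext hleft] at hcomp
  have hid := DFunLike.congr_fun (hcomp.unique (hasFDerivAt_id x)) (adjoint (fderiv ℝ q x) v)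
  have hhq : fderiv ℝ h x ∘L adjoint (fderiv ℝ q x) = 0 := by
    simpa only [ContinuousLinearMap.adjoint_comp, ContinuousLinearMap.adjoint_adjoint, map_zero]
      using congrArg adjoint horth₂
  have hh0 : fderiv ℝ h x (adjoint (fderiv ℝ q x) v) = 0 := DFunLike.congr_fun hhq v
  have hqv : fderiv ℝ q x (adjoint (fderiv ℝ q x) v) = v := DFunLike.congr_fun horth₁ v
  simpa only [ContinuousLinearMap.comp_apply, ContinuousLinearMap.prod_apply, hh0, hqv,
    ContinuousLinearMap.id_apply] using hid

theorem gradient_slice_eq [CompleteSpace G] {q : E → G} {Ψ : F × G → E} {x : E}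
    (hf : DifferentiableAt ℝ f x) (hh : DifferentiableAt ℝ h x) (hq : DifferentiableAt ℝ q x)
    (hΨ : DifferentiableAt ℝ Ψ (h x, q x)) (hleft : ∀ x, Ψ (h x, q x) = x)
    (horth₁ : fderiv ℝ q x ∘L adjoint (fderiv ℝ q x) = ContinuousLinearMap.id ℝ G)
    (horth₂ : fderiv ℝ q x ∘L adjoint (fderiv ℝ h x) = 0) :
    gradient (fun η => f (Ψ (h x, η))) (q x) = fderiv ℝ q x (gradient f x) := by
  have hslice : HasFDerivAt (fun η => Ψ (h x, η))
      (fderiv ℝ Ψ (h x, q x) ∘L ContinuousLinearMap.inr ℝ F G) (q x) :=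
    hΨ.hasFDerivAt.comp (q x) (hasFDerivAt_prodMk_right (h x) (q x))
  have hfΨ : HasFDerivAt f (fderiv ℝ f x) (Ψ (h x, q x)) := (hleft x).symm ▸ hf.hasFDerivAt
  have hcomp : HasFDerivAt (fun η => f (Ψ (h x, η)))
      (fderiv ℝ f x ∘L fderiv ℝ Ψ (h x, q x) ∘L ContinuousLinearMap.inr ℝ F G) (q x) :=
    hfΨ.comp (q x) hslice
  refine ext_inner_right ℝ fun v => ?_
  rw [inner_gradient_left, hcomp.fderiv, ← ContinuousLinearMap.adjoint_inner_right,
    inner_gradient_left, ← fderiv_inverse_inr hh hq hΨ hleft horth₁ horth₂]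
  rfl

namespace IsPITrajectory

variable {kp ki : ℝ} {x : ℝ → E} {z : ℝ → F} {t : ℝ}

theorem hasDerivWithinAt_constraint (htraj : IsPITrajectory f h kp ki x z)
    (hh : DifferentiableAt ℝ h (x t)) (hunit : IsUnit (constraintGram h (x t))) (ht : 0 ≤ t) :
    HasDerivWithinAt (fun s => h (x s)) (-constraintGram h (x t)
      (kp • h (x t) + ki • z t - leastSquaresMultiplier f h (x t))) (Ici 0) t := by
  refine (hh.hasFDerivAt.comp_hasDerivWithinAt t
    (htraj.hasDerivWithinAt_state t ht)).congr_deriv ?_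
  rw [map_sub (constraintGram h (x t)), constraintGram_leastSquaresMultiplier hunit, map_sub,
    map_neg, constraintGram, ContinuousLinearMap.comp_apply]
  abel

theorem hasDerivWithinAt_tangential (htraj : IsPITrajectory f h kp ki x z) {q : E → G}
    (hq : DifferentiableAt ℝ q (x t))
    (horth : fderiv ℝ q (x t) ∘L adjoint (fderiv ℝ h (x t)) = 0) (ht : 0 ≤ t) :
    HasDerivWithinAt (fun s => q (x s)) (-fderiv ℝ q (x t) (gradient f (x t))) (Ici 0) t := by
  refine (hq.hasFDerivAt.comp_hasDerivWithinAt t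
    (htraj.hasDerivWithinAt_state t ht)).congr_deriv ?_
  rw [map_sub, map_neg, ← ContinuousLinearMap.comp_apply, horth, zero_apply,
    sub_zero]

theorem isErrorTrajectory (htraj : IsPITrajectory f h kp ki x z) {q : E → G}
    (hh : Differentiable ℝ h) (hq : Differentiable ℝ q)
    (hunit : ∀ x, IsUnit (constraintGram h x))
    (horth : ∀ x, fderiv ℝ q x ∘L adjoint (fderiv ℝ h x) = 0) (hkp : kp ≠ 0) (lam : F) (η₀ : G) :
    IsErrorTrajectory kp (ki / kp ^ 2) (fun t => constraintGram h (x t))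
      (fun t => kp • h (x t) + ki • z t - lam) (fun t => ki • z t - lam)
      (fun t => leastSquaresMultiplier f h (x t) - lam) (fun t => q (x t) - η₀)
      (fun t => fderiv ℝ q (x t) (gradient f (x t))) where
  hasDerivWithinAt_multiplier t ht := by
    refine ((((htraj.hasDerivWithinAt_constraint (hh _) (hunit _) ht).const_smul kp).add
      ((htraj.hasDerivWithinAt_integral t ht).const_smul ki)).sub_const lam).congr_deriv ?_
    have hki : ki • h (x t) = kp • (ki / kp ^ 2) • kp • h (x t) := by
      rw [smul_smul, smul_smul]
      congr 1
      field_simp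
    rw [hki, sub_sub_sub_cancel_right, sub_sub_sub_cancel_right, add_sub_cancel_right]
    module
  hasDerivWithinAt_integral t ht := by
    refine (((htraj.hasDerivWithinAt_integral t ht).const_smul ki).sub_const lam).congr_deriv ?_
    rw [sub_sub_sub_cancel_right, add_sub_cancel_right, smul_smul, smul_smul]
    congr 1
    field_simp
  hasDerivWithinAt_tangential t ht :=
    (htraj.hasDerivWithinAt_tangential (hq _) (horth _) ht).sub_const η₀

end IsPITrajectory

theorem secant_le_inner_tangential [CompleteSpace G] {q : E → G} {Ψ : F × G → E}
    (hf : Differentiable ℝ f) (hh : Differentiable ℝ h) (hq : Differentiable ℝ q)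
    (hΨ : Differentiable ℝ Ψ) (hleft : ∀ x, Ψ (h x, q x) = x)
    (hright : ∀ p, (h (Ψ p), q (Ψ p)) = p)
    (horth₁ : ∀ x, fderiv ℝ q x ∘L adjoint (fderiv ℝ q x) = ContinuousLinearMap.id ℝ G)
    (horth₂ : ∀ x, fderiv ℝ q x ∘L adjoint (fderiv ℝ h x) = 0) {ρ L₁ : ℝ} {ηstar : G}
    (hsecant : ∀ η, ρ * ‖η - ηstar‖ ^ 2
      ≤ ⟪η - ηstar, gradient (fun η => f (Ψ (0, η))) η⟫)
    (htrans : ∀ y η, ‖fderiv ℝ q (Ψ (y, η)) (gradient f (Ψ (y, η)))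
      - fderiv ℝ q (Ψ (0, η)) (gradient f (Ψ (0, η)))‖ ≤ L₁ * ‖y‖) (x : E) :
    ρ * ‖q x - ηstar‖ ^ 2 - |L₁| * ‖h x‖ * ‖q x - ηstar‖
      ≤ ⟪q x - ηstar, fderiv ℝ q x (gradient f x)⟫ := by
  set p := Ψ (0, q x)
  have hhp : h p = 0 := congrArg Prod.fst (hright (0, q x))
  have hqp : q p = q x := congrArg Prod.snd (hright (0, q x))
  have hgrad : gradient (fun η => f (Ψ (0, η))) (q x) = fderiv ℝ q p (gradient f p) := by
    simpa only [hhp, hqp] using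
      gradient_slice_eq (hf p) (hh p) (hq p) (hΨ _) hleft (horth₁ p) (horth₂ p)
  have hclose : ‖fderiv ℝ q x (gradient f x) - fderiv ℝ q p (gradient f p)‖ ≤ |L₁| * ‖h x‖ := by
    have := htrans (h x) (q x)
    rw [hleft] at this
    exact this.trans (by gcongr; exact le_abs_self L₁)
  have := hsecant (q x)
  rw [hgrad] at this
  linarith [inner_sub_mul_norm_le_inner (u := q x - ηstar) hclose]

theorem pi_dynamics_global_exponential_stability_general [CompleteSpace G]
    (hf : Differentiable ℝ f) (hh : Differentiable ℝ h) {q : E → G} (hq : Differentiable ℝ q)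
    {Ψ : F × G → E} (hΨ : Differentiable ℝ Ψ) (hleft : ∀ x, Ψ (h x, q x) = x)
    (hright : ∀ p, (h (Ψ p), q (Ψ p)) = p)
    (horth₁ : ∀ x, fderiv ℝ q x ∘L adjoint (fderiv ℝ q x) = ContinuousLinearMap.id ℝ G)
    (horth₂ : ∀ x, fderiv ℝ q x ∘L adjoint (fderiv ℝ h x) = 0)
    {mlow mup : ℝ} (hmlow : 0 < mlow)
    (hcoerc : ∀ x v, mlow * ‖v‖ ^ 2
      ≤ ⟪adjoint (fderiv ℝ h x) v, adjoint (fderiv ℝ h x) v⟫)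
    (hmup : ∀ x, ‖constraintGram h x‖ ≤ mup)
    {ρη : ℝ} (hρη : 0 < ρη) {xstar : E} (hstar : h xstar = 0)
    (hsecant : ∀ η, ρη * ‖η - q xstar‖ ^ 2
      ≤ ⟪η - q xstar, gradient (fun η => f (Ψ (0, η))) η⟫)
    {LΦ LΨ : ℝ}
    (hΦLip : ∀ x, √(‖h x - h xstar‖ ^ 2 + ‖q x - q xstar‖ ^ 2) ≤ LΦ * ‖x - xstar‖)
    (hΨLip : ∀ x, ‖x - xstar‖ ≤ LΨ * √(‖h x - h xstar‖ ^ 2 + ‖q x - q xstar‖ ^ 2))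
    {L₁ : ℝ} (htrans : ∀ y η, ‖fderiv ℝ q (Ψ (y, η)) (gradient f (Ψ (y, η)))
      - fderiv ℝ q (Ψ (0, η)) (gradient f (Ψ (0, η)))‖ ≤ L₁ * ‖y‖)
    {L₂ : ℝ} {lamstar : F}
    (hφLip : ∀ x, ‖leastSquaresMultiplier f h x - lamstar‖ ≤ L₂ * ‖x - xstar‖) :
    ∃ kpstar : ℝ, 0 < kpstar ∧ ∀ kp ki : ℝ, kpstar < kp → 0 < ki → ki ≤ mlow * kp ^ 2 →
      ∃ cπ ρπ : ℝ, 0 < cπ ∧ 0 < ρπ ∧ ∀ (x : ℝ → E) (z : ℝ → F), IsPITrajectory f h kp ki x z →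
        ∀ t, 0 ≤ t → √(‖x t - xstar‖ ^ 2 + ‖kp • h (x t) + ki • z t - lamstar‖ ^ 2)
          ≤ cπ * Real.exp (-ρπ * t)
            * √(‖x 0 - xstar‖ ^ 2 + ‖kp • h (x 0) + ki • z 0 - lamstar‖ ^ 2) := by
  obtain ⟨K, hK, hdecay⟩ := exists_gain_threshold_error_decay (F := F) (G := G) hmlow
    (lt_max_of_lt_left hmlow : 0 < max mlow mup) (by positivity : 0 ≤ |L₂| * |LΨ|) hρη
    (abs_nonneg L₁)
  refine ⟨K, hK, fun kp ki hkp hki hkik => ?_⟩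
  have hkp0 : 0 < kp := hK.trans hkp
  obtain ⟨c, r, hc, hr, hdecay⟩ := hdecay kp (ki / kp ^ 2) hkp (by positivity)
    ((div_le_iff₀ (by positivity)).2 hkik)
  have hcoer (x : E) (v : F) : mlow * ‖v‖ ^ 2 ≤ ⟪v, constraintGram h x v⟫ :=
    (hcoerc x v).trans_eq (inner_constraintGram_right h x v).symm
  refine ⟨√((1 + LΨ ^ 2) * (1 + 2 / kp ^ 2) * c * (3 + (1 + 2 * kp ^ 2) * LΦ ^ 2)), r / 2,
    by positivity, by positivity, fun x z htraj t ht => ?_⟩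
  have hy (s : ℝ) : kp • (h (x s) - h xstar)
      = kp • h (x s) + ki • z s - lamstar - (ki • z s - lamstar) := by
    rw [hstar, sub_zero, sub_sub_sub_cancel_right, add_sub_cancel_right]
  refine sqrt_le_mul_exp_mul_sqrt hc.le (by positivity) (by positivity)
    (sq_norm_add_sq_norm_le_error hkp0 (hy t) (norm_nonneg _) (hΨLip (x t)))
    (hdecay _ _ _ _ _ _ (htraj.isErrorTrajectory hh hq
      (fun x => isUnit_constraintGram hmlow (hcoer x)) horth₂ hkp0.ne' lamstar (q xstar))
      (fun s _ => ?_) t ht)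
    (error_le_sq_norm_add_sq_norm (hy 0) (hΦLip (x 0)))
  have hnorm : ‖kp • h (x s) + ki • z s - lamstar - (ki • z s - lamstar)‖ / kp = ‖h (x s)‖ := by
    rw [← hy, hstar, sub_zero, norm_smul, Real.norm_of_nonneg hkp0.le,
      mul_div_cancel_left₀ _ hkp0.ne']
  exact
    { coercive := hcoer (x s)
      opNorm_le := (hmup (x s)).trans (le_max_right _ _)
      multiplier_le := hnorm ▸ norm_multiplier_sub_le hstar (hφLip (x s)) (hΨLip (x s))
      secant_le := hnorm ▸ secant_le_inner_tangential hf hh hq hΨ hleft hright horth₁ horth₂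
        hsecant htrans (x s) }

end ConstrainedGeometry

/-- Theorem 3: Global exponential stability of the PI dynamics.
There exists a gain threshold `k_p* > 0` such that for all `k_p > k_p*` and
`0 < k_i < m̲ k_p²`, every solution of the PI dynamics converges globally
exponentially to `(x*, λ*)` in the ℓ² product norm. -/
theorem pi_dynamics_global_exponential_stability
    (n m : ℕ) (hm : 1 ≤ m) (hmn : m < n)
    (f : EuclideanSpace ℝ (Fin n) → ℝ)
    (h : EuclideanSpace ℝ (Fin n) → EuclideanSpace ℝ (Fin m))
    (q : EuclideanSpace ℝ (Fin n) → EuclideanSpace ℝ (Fin (n - m)))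
    (Ψ : EuclideanSpace ℝ (Fin m) × EuclideanSpace ℝ (Fin (n - m)) → EuclideanSpace ℝ (Fin n))
    (hf : ContDiff ℝ 1 f) (hh : ContDiff ℝ 1 h) (hq : ContDiff ℝ 1 q)
    (hΨ : ContDiff ℝ 1 Ψ)
    (hleft : ∀ x, Ψ (h x, q x) = x)
    (hright : ∀ p, (h (Ψ p), q (Ψ p)) = p)
    (horth₁ : ∀ x, (fderiv ℝ q x) ∘L (ContinuousLinearMap.adjoint (fderiv ℝ q x))
      = ContinuousLinearMap.id ℝ (EuclideanSpace ℝ (Fin (n - m))))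
    (horth₂ : ∀ x, (fderiv ℝ q x) ∘L (ContinuousLinearMap.adjoint (fderiv ℝ h x)) = 0)
    -- (i) uniform full rank and uniform upper bound on the Gram map
    (mlow mup : ℝ) (hmlow : 0 < mlow)
    (hcoerc : ∀ (x : EuclideanSpace ℝ (Fin n)) (v : EuclideanSpace ℝ (Fin m)),
      ⟪(ContinuousLinearMap.adjoint (fderiv ℝ h x)) v,
        (ContinuousLinearMap.adjoint (fderiv ℝ h x)) v⟫ ≥ mlow * ‖v‖ ^ 2)
    (hinv : ∀ x, IsUnit ((fderiv ℝ h x) ∘L (ContinuousLinearMap.adjoint (fderiv ℝ h x))))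
    (hmup : ∀ x, ‖(fderiv ℝ h x) ∘L (ContinuousLinearMap.adjoint (fderiv ℝ h x))‖ ≤ mup)
    -- (ii) strong convexity of f̃ = f ∘ p on the constraint manifold
    (ρη : ℝ) (hρη : 0 < ρη)
    (hconv : ∀ u v : EuclideanSpace ℝ (Fin (n - m)),
      f (Ψ (0, v)) ≥ f (Ψ (0, u)) + ⟪gradient (fun η => f (Ψ (0, η))) u, v - u⟫
        + (ρη / 2) * ‖v - u‖ ^ 2)
    (ηstar : EuclideanSpace ℝ (Fin (n - m)))
    (hcrit : gradient (fun η => f (Ψ (0, η))) ηstar = 0)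
    (xstar : EuclideanSpace ℝ (Fin n)) (hxstar : xstar = Ψ (0, ηstar))
    -- (iii) global Lipschitz continuity of Φ and Φ⁻¹ (ℓ² product norm)
    (LΦ LΨ : ℝ)
    (hΦLip : ∀ x x' : EuclideanSpace ℝ (Fin n),
      Real.sqrt (‖h x - h x'‖ ^ 2 + ‖q x - q x'‖ ^ 2) ≤ LΦ * ‖x - x'‖)
    (hΨLip : ∀ p p' : EuclideanSpace ℝ (Fin m) × EuclideanSpace ℝ (Fin (n - m)),
      ‖Ψ p - Ψ p'‖ ≤ LΨ * Real.sqrt (‖p.1 - p'.1‖ ^ 2 + ‖p.2 - p'.2‖ ^ 2))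
    -- (iv) transverse Lipschitz bound
    (L₁ : ℝ) (hL₁ : 0 < L₁)
    (htrans : ∀ (y : EuclideanSpace ℝ (Fin m)) (η : EuclideanSpace ℝ (Fin (n - m))),
      ‖(fderiv ℝ q (Ψ (y, η))) (gradient f (Ψ (y, η)))
        - (fderiv ℝ q (Ψ (0, η))) (gradient f (Ψ (0, η)))‖ ≤ L₁ * ‖y‖)
    -- (v) the least-squares multiplier map φ is globally Lipschitz with constant L₂
    (L₂ : ℝ)
    (hφLip : ∀ x₁ x₂ : EuclideanSpace ℝ (Fin n),
      ‖(-(Ring.inverse ((fderiv ℝ h x₁) ∘L (ContinuousLinearMap.adjoint (fderiv ℝ h x₁)))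
            ((fderiv ℝ h x₁) (gradient f x₁))))
        - (-(Ring.inverse ((fderiv ℝ h x₂) ∘L (ContinuousLinearMap.adjoint (fderiv ℝ h x₂)))
            ((fderiv ℝ h x₂) (gradient f x₂))))‖ ≤ L₂ * ‖x₁ - x₂‖)
    (lamstar : EuclideanSpace ℝ (Fin m))
    (hlamstar : lamstar =
      -(Ring.inverse ((fderiv ℝ h xstar) ∘L (ContinuousLinearMap.adjoint (fderiv ℝ h xstar)))
        ((fderiv ℝ h xstar) (gradient f xstar)))) :
    -- conclusion
    ∃ kpstar : ℝ, 0 < kpstar ∧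
      ∀ kp ki : ℝ, kpstar < kp → 0 < ki → ki < mlow * kp ^ 2 →
        ∃ cπ ρπ : ℝ, 0 < cπ ∧ 0 < ρπ ∧
          ∀ (x : ℝ → EuclideanSpace ℝ (Fin n)) (z : ℝ → EuclideanSpace ℝ (Fin m)),
            (∀ t, 0 ≤ t → HasDerivAt x
              (-gradient f (x t) - (ContinuousLinearMap.adjoint (fderiv ℝ h (x t)))
                (kp • h (x t) + ki • z t)) t) →
            (∀ t, 0 ≤ t → HasDerivAt z (h (x t)) t) →
            ∀ t, 0 ≤ t →
              Real.sqrt (‖x t - xstar‖ ^ 2 + ‖(kp • h (x t) + ki • z t) - lamstar‖ ^ 2)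
                ≤ cπ * Real.exp (-ρπ * t) *
                  Real.sqrt (‖x 0 - xstar‖ ^ 2 + ‖(kp • h (x 0) + ki • z 0) - lamstar‖ ^ 2) := by
  have hstar : (h xstar, q xstar) = (0, ηstar) := hxstar ▸ hright (0, ηstar)
  obtain ⟨hhstar, rfl⟩ := Prod.mk.inj hstar
  obtain ⟨K, hK, hdecay⟩ := pi_dynamics_global_exponential_stability_general
    (hf.differentiable one_ne_zero) (hh.differentiable one_ne_zero) (hq.differentiable one_ne_zero)
    (hΨ.differentiable one_ne_zero) hleft hright horth₁ horth₂ hmlow hcoerc hmup hρη hhstar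
    (fun η => by simpa only [hcrit, sub_zero] using
      mul_sq_norm_sub_le_inner_gradient_sub hconv η (q xstar))
    (fun x => hΦLip x xstar)
    (fun x => by simpa only [hleft] using hΨLip (h x, q x) (h xstar, q xstar)) htrans
    (fun x => hlamstar ▸ hφLip x xstar)
  refine ⟨K, hK, fun kp ki hkp hki hkik => ?_⟩
  obtain ⟨c, r, hc, hr, hdecay⟩ := hdecay kp ki hkp hki hkik.le
  exact ⟨c, r, hc, hr, fun x z hx hz => hdecay x z
    ⟨fun t ht => (hx t ht).hasDerivWithinAt, fun t ht => (hz t ht).hasDerivWithinAt⟩⟩
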